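/- Neither of the functions x ↦ (h₁(x))²·e^{−x²}/(1+2x²)² and x ↦ (h₂(x))²·e^{−x²}/(1+2x²)² is Lebesgue integrable on ℝ, where h₁(x) = 4x + √π·e^{x²}·(1−2x²)·(1−erf(x)) and h₂(x) = 2 + 4x² + 4√π·x·e^{x²}·(1−erf(x)). -/

import Mathlib

/-- The error function. -/
noncomputable def erf (x : ℝ) : ℝ :=
  (2 / Real.sqrt Real.pi) * ∫ t in (0 : ℝ)..x, Real.exp (-t ^ 2)

/-- The non-polynomial solution Ĥ₁. -/
noncomputable def h1 (x : ℝ) : ℝ :=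
  4 * x + Real.sqrt Real.pi * Real.exp (x ^ 2) * (1 - 2 * x ^ 2) * (1 - erf x)

/-- The non-polynomial solution Ĥ₂. -/
noncomputable def h2 (x : ℝ) : ℝ :=
  2 + 4 * x ^ 2 + 4 * Real.sqrt Real.pi * x * Real.exp (x ^ 2) * (1 - erf x)

lemma aux_not_int (f : ℝ → ℝ) (h : ∀ x ≤ (-2 : ℝ), 1 / 9 ≤ f x) :
    ¬ MeasureTheory.Integrable f := by
  intro hf
  have h1 : MeasureTheory.IntegrableOn (fun _ : ℝ => (1 / 9 : ℝ)) (Set.Iic (-2)) := by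
    refine MeasureTheory.Integrable.mono' (hf.integrableOn (s := Set.Iic (-2))) (by fun_prop) ?_
    filter_upwards [MeasureTheory.ae_restrict_mem measurableSet_Iic] with x hx
    rw [Real.norm_of_nonneg (by norm_num)]
    exact h x hx
  rw [MeasureTheory.integrableOn_const_iff] at h1
  simp at h1

lemma aux_erf (x : ℝ) (hx : x ≤ 0) : 1 ≤ 1 - erf x := by
  have h : 0 ≤ ∫ t in x..(0 : ℝ), Real.exp (-t ^ 2) :=
    intervalIntegral.integral_nonneg hx (fun t _ => (Real.exp_pos _).le)
  unfold erf
  rw [intervalIntegral.integral_symm]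
  have : 0 ≤ (2 / Real.sqrt Real.pi) * ∫ t in x..(0 : ℝ), Real.exp (-t ^ 2) := by positivity
  linarith

lemma aux_sqrt : 1 ≤ Real.sqrt Real.pi := by
  rw [Real.one_le_sqrt]
  linarith [Real.pi_gt_three]

lemma aux_K (x : ℝ) (hx : x ≤ -2) : ∃ K : ℝ, Real.exp (x ^ 2) ≤ K ∧
    K = Real.sqrt Real.pi * Real.exp (x ^ 2) * (1 - erf x) := by
  refine ⟨_, ?_, rfl⟩
  have h1 := aux_erf x (by linarith)
  have h2 := aux_sqrt
  have h3 := Real.exp_pos (x ^ 2)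
  have h4 : Real.exp (x ^ 2) ≤ Real.sqrt Real.pi * Real.exp (x ^ 2) := by nlinarith
  nlinarith

lemma aux_bound (x h c : ℝ) (hc : 0 ≤ c) (h0 : c * Real.exp (x ^ 2) ≤ -h)
    (h1 : 1 / 9 * (1 + 2 * x ^ 2) ^ 2 ≤ c ^ 2 * Real.exp (x ^ 2)) :
    1 / 9 ≤ h ^ 2 * Real.exp (-x ^ 2) / (1 + 2 * x ^ 2) ^ 2 := by
  rw [le_div_iff₀ (by positivity), Real.exp_neg]
  have hE := Real.exp_pos (x ^ 2)
  refine h1.trans ?_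
  rw [← div_eq_mul_inv, le_div_iff₀ hE]
  have : (c * Real.exp (x ^ 2)) ^ 2 ≤ (-h) ^ 2 := pow_le_pow_left₀ (by positivity) h0 2
  nlinarith

theorem stmt5 :
    ¬ MeasureTheory.Integrable
        (fun x : ℝ => (h1 x) ^ 2 * Real.exp (-x ^ 2) / (1 + 2 * x ^ 2) ^ 2) ∧
    ¬ MeasureTheory.Integrable
        (fun x : ℝ => (h2 x) ^ 2 * Real.exp (-x ^ 2) / (1 + 2 * x ^ 2) ^ 2) := by
  constructor
  · apply aux_not_int
    intro x hx
    obtain ⟨K, hK, hKe⟩ := aux_K x hx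
    have hx2 : 4 ≤ x ^ 2 := by nlinarith
    have hE1 := Real.add_one_le_exp (x ^ 2)
    apply aux_bound x (h1 x) (2 * x ^ 2 - 1) (by linarith)
    · have : h1 x = 4 * x + (1 - 2 * x ^ 2) * K := by rw [hKe]; unfold h1; ring
      rw [this]
      nlinarith
    · have : 1 / 9 * (1 + 2 * x ^ 2) ^ 2 ≤ (2 * x ^ 2 - 1) ^ 2 := by nlinarith
      nlinarith [sq_nonneg (2 * x ^ 2 - 1)]
  · apply aux_not_int
    intro x hx
    obtain ⟨K, hK, hKe⟩ := aux_K x hx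
    have hx2 : 4 ≤ x ^ 2 := by nlinarith
    have hE1 := Real.add_one_le_exp (x ^ 2)
    apply aux_bound x (h2 x) 4 (by norm_num)
    · have : h2 x = 2 + 4 * x ^ 2 + 4 * x * K := by rw [hKe]; unfold h2; ring
      rw [this]
      nlinarith
    · have h3 := Real.add_one_le_exp (x ^ 2 / 2)
      have h4 : Real.exp (x ^ 2) = Real.exp (x ^ 2 / 2) ^ 2 := by
        rw [← Real.exp_nat_mul]; congr 1; push_cast; ring
      have h5 : (x ^ 2 / 2 + 1) ^ 2 ≤ Real.exp (x ^ 2 / 2) ^ 2 :=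
        pow_le_pow_left₀ (by positivity) h3 2
      rw [h4]
      nlinarith
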